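/- Soundness of case 2 of Inverse_L: If G is a sub-term of the typed ASP λ-calculus formula H (both in β-normal form) and F = λv.H(G:v), where H(G:v) denotes the result of replacing every occurrence of G in H by the fresh variable v of the same type as G, then F @ G β-reduces to H. -/

import Mathlib

/- Typed Answer Set Programming lambda calculus (Baral, Dzifcak, Gonzalez, Gottesman).

   Base types: e (terms), a (atoms), l (literals), g (gen-literals),
   d (bodies), h (heads), t (satisfiability values).  Terms are de Bruijn
   lambda terms over ASP connectives; function and predicate symbols are
   constants of iterated arrow type applied via `app`. -/

namespace ASPLambda

inductive BTy : Type
  | e | a | l | g | d | h | t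
deriving DecidableEq, Repr

inductive Ty : Type
  | base : BTy → Ty
  | arrow : Ty → Ty → Ty
deriving DecidableEq, Repr

/-- The order of a type: base types have order 0,
    `order (A → B) = max (order A + 1) (order B)`. -/
def Ty.order : Ty → ℕ
  | .base _ => 0
  | .arrow A B => max (A.order + 1) B.order

/-- Iterated arrow type `A → ⋯ → A → B` with `n` arguments. -/
def Ty.arrN : ℕ → Ty → Ty → Ty
  | 0, _, B => B
  | n + 1, A, B => .arrow A (Ty.arrN n A B)

/-- ASP typed terms (de Bruijn representation).  `neg` is classical negation ¬,
    `naf` is negation as failure (not), `disj` is `or`, `conj` is `,`,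
    `rule h b` is `h ← b.`, `ruleH h` is `h ←.`, `ruleB b` is `← b.`,
    and `seq` juxtaposes rules/programs. -/
inductive Tm : Type
  | var : ℕ → Tm
  | const : String → Ty → Tm
  | app : Tm → Tm → Tm
  | lam : Ty → Tm → Tm
  | neg : Tm → Tm
  | naf : Tm → Tm
  | disj : Tm → Tm → Tm
  | conj : Tm → Tm → Tm
  | rule : Tm → Tm → Tm
  | ruleH : Tm → Tm
  | ruleB : Tm → Tm
  | seq : Tm → Tm → Tm
deriving DecidableEq, Repr

namespace Tm

/-- de Bruijn shift by `dpl` of indices ≥ `c`. -/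
def shift (dpl c : ℕ) : Tm → Tm
  | .var n => if n < c then .var n else .var (n + dpl)
  | .const s A => .const s A
  | .app f x => .app (f.shift dpl c) (x.shift dpl c)
  | .lam A b => .lam A (b.shift dpl (c + 1))
  | .neg x => .neg (x.shift dpl c)
  | .naf x => .naf (x.shift dpl c)
  | .disj x y => .disj (x.shift dpl c) (y.shift dpl c)
  | .conj x y => .conj (x.shift dpl c) (y.shift dpl c)
  | .rule x y => .rule (x.shift dpl c) (y.shift dpl c)
  | .ruleH x => .ruleH (x.shift dpl c)
  | .ruleB x => .ruleB (x.shift dpl c)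
  | .seq x y => .seq (x.shift dpl c) (y.shift dpl c)

/-- Substitution of `s` for de Bruijn index `j` (decrementing higher indices). -/
def subst : ℕ → Tm → Tm → Tm
  | j, s, .var n => if n = j then s else if j < n then .var (n - 1) else .var n
  | _, _, .const c A => .const c A
  | j, s, .app f x => .app (subst j s f) (subst j s x)
  | j, s, .lam A b => .lam A (subst (j + 1) (s.shift 1 0) b)
  | j, s, .neg x => .neg (subst j s x)
  | j, s, .naf x => .naf (subst j s x)
  | j, s, .disj x y => .disj (subst j s x) (subst j s y)
  | j, s, .conj x y => .conj (subst j s x) (subst j s y)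
  | j, s, .rule x y => .rule (subst j s x) (subst j s y)
  | j, s, .ruleH x => .ruleH (subst j s x)
  | j, s, .ruleB x => .ruleB (subst j s x)
  | j, s, .seq x y => .seq (subst j s x) (subst j s y)

/-- Whether the de Bruijn index `k` occurs free. -/
def hasFree (k : ℕ) : Tm → Bool
  | .var n => n == k
  | .const _ _ => false
  | .app f x => f.hasFree k || x.hasFree k
  | .lam _ b => b.hasFree (k + 1)
  | .neg x => x.hasFree k
  | .naf x => x.hasFree k
  | .disj x y => x.hasFree k || y.hasFree k
  | .conj x y => x.hasFree k || y.hasFree k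
  | .rule x y => x.hasFree k || y.hasFree k
  | .ruleH x => x.hasFree k
  | .ruleB x => x.hasFree k
  | .seq x y => x.hasFree k || y.hasFree k

/-- Every abstractor binds (at least one occurrence of) its variable (λI condition). -/
def lamI : Tm → Bool
  | .var _ => true
  | .const _ _ => true
  | .app f x => f.lamI && x.lamI
  | .lam _ b => b.lamI && b.hasFree 0
  | .neg x => x.lamI
  | .naf x => x.lamI
  | .disj x y => x.lamI && y.lamI
  | .conj x y => x.lamI && y.lamI
  | .rule x y => x.lamI && y.lamI
  | .ruleH x => x.lamI
  | .ruleB x => x.lamI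
  | .seq x y => x.lamI && y.lamI

/-- A λ-term in the sense of the signature: a variable or a constant. -/
def isVarOrConst : Tm → Bool
  | .var _ => true
  | .const _ _ => true
  | _ => false

/-- Contains no lambda abstractor. -/
def noLam : Tm → Bool
  | .var _ => true
  | .const _ _ => true
  | .app f x => f.noLam && x.noLam
  | .lam _ _ => false
  | .neg x => x.noLam
  | .naf x => x.noLam
  | .disj x y => x.noLam && y.noLam
  | .conj x y => x.noLam && y.noLam
  | .rule x y => x.noLam && y.noLam
  | .ruleH x => x.noLam
  | .ruleB x => x.noLam
  | .seq x y => x.noLam && y.noLam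

/-- The head of an application spine is a variable. -/
def headIsVar : Tm → Bool
  | .var _ => true
  | .app f _ => f.headIsVar
  | _ => false

/-- Contains no application whose head is a (bound) variable. -/
def noVarApp : Tm → Bool
  | .var _ => true
  | .const _ _ => true
  | .app f x => !(f.headIsVar) && f.noVarApp && x.noVarApp
  | .lam _ b => b.noVarApp
  | .neg x => x.noVarApp
  | .naf x => x.noVarApp
  | .disj x y => x.noVarApp && y.noVarApp
  | .conj x y => x.noVarApp && y.noVarApp
  | .rule x y => x.noVarApp && y.noVarApp
  | .ruleH x => x.noVarApp
  | .ruleB x => x.noVarApp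
  | .seq x y => x.noVarApp && y.noVarApp

/-- Number of symbols of a formula (its size). -/
def size : Tm → ℕ
  | .var _ => 1
  | .const _ _ => 1
  | .app f x => f.size + x.size + 1
  | .lam _ b => b.size + 1
  | .neg x => x.size + 1
  | .naf x => x.size + 1
  | .disj x y => x.size + y.size + 1
  | .conj x y => x.size + y.size + 1
  | .rule x y => x.size + y.size + 1
  | .ruleH x => x.size + 1
  | .ruleB x => x.size + 1
  | .seq x y => x.size + y.size + 1

/-- Number of lambda abstractors; in a formula (where every abstractor binds a
    variable and every variable is bound) this is the number of variables. -/
def numAbs : Tm → ℕ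
  | .var _ => 0
  | .const _ _ => 0
  | .app f x => f.numAbs + x.numAbs
  | .lam _ b => b.numAbs + 1
  | .neg x => x.numAbs
  | .naf x => x.numAbs
  | .disj x y => x.numAbs + y.numAbs
  | .conj x y => x.numAbs + y.numAbs
  | .rule x y => x.numAbs + y.numAbs
  | .ruleH x => x.numAbs
  | .ruleB x => x.numAbs
  | .seq x y => x.numAbs + y.numAbs

/-- Replacement `t(A : B)`: replace every occurrence of `A` in `t` by `B`
    (shifting under binders). -/
def replace : Tm → Tm → Tm → Tm
  | .var n, A, B => if Tm.var n = A then B else .var n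
  | .const s T, A, B => if Tm.const s T = A then B else .const s T
  | .app f x, A, B => if Tm.app f x = A then B else .app (f.replace A B) (x.replace A B)
  | .lam T b, A, B => if Tm.lam T b = A then B else .lam T (b.replace (A.shift 1 0) (B.shift 1 0))
  | .neg x, A, B => if Tm.neg x = A then B else .neg (x.replace A B)
  | .naf x, A, B => if Tm.naf x = A then B else .naf (x.replace A B)
  | .disj x y, A, B => if Tm.disj x y = A then B else .disj (x.replace A B) (y.replace A B)
  | .conj x y, A, B => if Tm.conj x y = A then B else .conj (x.replace A B) (y.replace A B)
  | .rule x y, A, B => if Tm.rule x y = A then B else .rule (x.replace A B) (y.replace A B)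
  | .ruleH x, A, B => if Tm.ruleH x = A then B else .ruleH (x.replace A B)
  | .ruleB x, A, B => if Tm.ruleB x = A then B else .ruleB (x.replace A B)
  | .seq x y, A, B => if Tm.seq x y = A then B else .seq (x.replace A B) (y.replace A B)

/-- Simultaneous sequential replacement `t(A₁,…,Aₙ : B₁,…,Bₙ)`. -/
def replaceList : Tm → List (Tm × Tm) → Tm
  | t, [] => t
  | t, (A, B) :: r => (t.replace A B).replaceList r

/-- Iterated abstraction `λv₁ … λvₙ. b`. -/
def lams : List Ty → Tm → Tm
  | [], b => b
  | A :: r, b => .lam A (Tm.lams r b)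

/-- Iterated application `f @ x₁ @ ⋯ @ xₙ`. -/
def apps : Tm → List Tm → Tm
  | f, [] => f
  | f, x :: r => Tm.apps (.app f x) r

end Tm

/-- Typing relation for ASP typed terms (Definition "ASP Typed Term").
    The coercion rules carry the side condition that the coerced term
    is not a λ-term (i.e. not a variable or constant). -/
inductive HasType : List Ty → Tm → Ty → Prop
  | var {Γ n A} : Γ[n]? = some A → HasType Γ (.var n) A
  | const {Γ s A} : HasType Γ (.const s A) A
  | app {Γ f x A B} : HasType Γ f (.arrow A B) → HasType Γ x A → HasType Γ (.app f x) B
  | lam {Γ b A B} : HasType (A :: Γ) b B → HasType Γ (.lam A b) (.arrow A B)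
  | atomLit {Γ x} : HasType Γ x (.base .a) → x.isVarOrConst = false → HasType Γ x (.base .l)
  | negLit {Γ x} : HasType Γ x (.base .a) → HasType Γ (.neg x) (.base .l)
  | litGen {Γ x} : HasType Γ x (.base .l) → x.isVarOrConst = false → HasType Γ x (.base .g)
  | nafGen {Γ x} : HasType Γ x (.base .l) → HasType Γ (.naf x) (.base .g)
  | litHead {Γ x} : HasType Γ x (.base .l) → x.isVarOrConst = false → HasType Γ x (.base .h)
  | disj {Γ x y} : HasType Γ x (.base .h) → HasType Γ y (.base .h) →
      HasType Γ (.disj x y) (.base .h)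
  | genBody {Γ x} : HasType Γ x (.base .g) → x.isVarOrConst = false → HasType Γ x (.base .d)
  | conj {Γ x y} : HasType Γ x (.base .d) → HasType Γ y (.base .d) →
      HasType Γ (.conj x y) (.base .d)
  | rule {Γ x y} : HasType Γ x (.base .h) → HasType Γ y (.base .d) →
      HasType Γ (.rule x y) (.base .t)
  | ruleH {Γ x} : HasType Γ x (.base .h) → HasType Γ (.ruleH x) (.base .t)
  | ruleB {Γ y} : HasType Γ y (.base .d) → HasType Γ (.ruleB y) (.base .t)
  | seq {Γ x y} : HasType Γ x (.base .t) → HasType Γ y (.base .t) →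
      HasType Γ (.seq x y) (.base .t)

/-- A typed ASP λ-calculus formula of type `A`: a closed well-typed ASP term
    in which every abstractor binds a variable. -/
structure IsFormula (t : Tm) (A : Ty) : Prop where
  typed : HasType [] t A
  lamI : t.lamI = true

/-- One step of β-reduction (with congruence through all constructors). -/
inductive Step : Tm → Tm → Prop
  | beta {A b x} : Step (.app (.lam A b) x) (Tm.subst 0 x b)
  | appL {f f' x} : Step f f' → Step (.app f x) (.app f' x)
  | appR {f x x'} : Step x x' → Step (.app f x) (.app f x')
  | lam {A b b'} : Step b b' → Step (.lam A b) (.lam A b')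
  | neg {x x'} : Step x x' → Step (.neg x) (.neg x')
  | naf {x x'} : Step x x' → Step (.naf x) (.naf x')
  | disjL {x x' y} : Step x x' → Step (.disj x y) (.disj x' y)
  | disjR {x y y'} : Step y y' → Step (.disj x y) (.disj x y')
  | conjL {x x' y} : Step x x' → Step (.conj x y) (.conj x' y)
  | conjR {x y y'} : Step y y' → Step (.conj x y) (.conj x y')
  | ruleL {x x' y} : Step x x' → Step (.rule x y) (.rule x' y)
  | ruleR {x y y'} : Step y y' → Step (.rule x y) (.rule x y')
  | ruleH {x x'} : Step x x' → Step (.ruleH x) (.ruleH x')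
  | ruleB {x x'} : Step x x' → Step (.ruleB x) (.ruleB x')
  | seqL {x x' y} : Step x x' → Step (.seq x y) (.seq x' y)
  | seqR {x y y'} : Step y y' → Step (.seq x y) (.seq x y')

/-- Multi-step β-reduction. -/
abbrev Steps : Tm → Tm → Prop := Relation.ReflTransGen Step

/-- β-normal form: no β-redex occurrences, i.e. no step is possible. -/
def Tm.IsNormal (t : Tm) : Prop := ∀ u, ¬ Step t u

/-- `N` is the β-normal form of `M`. -/
def NormalizesTo (M N : Tm) : Prop := Steps M N ∧ N.IsNormal

/-- `Occurs P Q`: the term `P` occurs in `Q` (`P` is a sub-term of `Q`). -/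
inductive Occurs : Tm → Tm → Prop
  | refl (t : Tm) : Occurs t t
  | appL {P M N} : Occurs P M → Occurs P (.app M N)
  | appR {P M N} : Occurs P N → Occurs P (.app M N)
  | lam {P A M} : Occurs P M → Occurs P (.lam A M)
  | neg {P M} : Occurs P M → Occurs P (.neg M)
  | naf {P M} : Occurs P M → Occurs P (.naf M)
  | disjL {P M N} : Occurs P M → Occurs P (.disj M N)
  | disjR {P M N} : Occurs P N → Occurs P (.disj M N)
  | conjL {P M N} : Occurs P M → Occurs P (.conj M N)
  | conjR {P M N} : Occurs P N → Occurs P (.conj M N)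
  | ruleL {P M N} : Occurs P M → Occurs P (.rule M N)
  | ruleR {P M N} : Occurs P N → Occurs P (.rule M N)
  | ruleH {P M} : Occurs P M → Occurs P (.ruleH M)
  | ruleB {P M} : Occurs P M → Occurs P (.ruleB M)
  | seqL {P M N} : Occurs P M → Occurs P (.seq M N)
  | seqR {P M N} : Occurs P N → Occurs P (.seq M N)

/-- The `Inverse_L` algorithm, as a relation: `InvL H G F` holds exactly when
    one of the four cases of `Inverse_L(H,G)` applies and produces the
    (non-null) output `F`.  Variables `v₁,…,v_s` are represented by de Bruijn
    indices: under binders `λv₁…λv_s`, the variable `v_k` is index `s - k`. -/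
inductive InvL : Tm → Tm → Tm → Prop
  | case1 (H : Tm) (A : Ty) :
      InvL H (.lam A (.var 0)) (.lam (.arrow A A) (.app (.var 0) (H.shift 1 0)))
  | case2 (H G : Tm) (A : Ty) :
      Occurs G H → HasType [] G A →
      InvL H G (.lam A ((H.shift 1 0).replace (G.shift 1 0) (.var 0)))
  | case3 (H G : Tm) (W : Ty) (Js : List (Tm × List Tm)) (tys : List Ty)
      (ks : List ℕ) (s m : ℕ) :
      (∀ A : Ty, G ≠ .lam A (.var 0)) →
      Js ≠ [] →
      tys.length = s → 1 ≤ s → s ≤ m → ks.length = m →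
      (∀ k ∈ ks, 1 ≤ k ∧ k ≤ s) →
      (∀ Ja ∈ Js, Ja.2.length = m ∧ Occurs Ja.1 H ∧ (∀ x ∈ Ja.2, Occurs x Ja.1) ∧
        G = Tm.lams tys ((Ja.1.shift s 0).replaceList
              ((Ja.2.map (fun x => x.shift s 0)).zip
                (ks.map (fun k => Tm.var (s - k)))))) →
      InvL H G (.lam W ((H.shift 1 0).replaceList
        (Js.map (fun Ja => (Ja.1.shift 1 0,
          Tm.apps (.var 0) (ks.map (fun k => (Ja.2.getD (k - 1) Ja.1).shift 1 0)))))))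
  | case4 (H G : Tm) (W W' : Ty) (tysI tysS : List Ty) (J J1 : Tm)
      (args : List Tm) (ks : List ℕ) (i s : ℕ) :
      tysI.length = i → tysS.length = s - i → i < s →
      args.length = s - i → ks.length = s - i →
      (∀ k ∈ ks, i + 1 ≤ k ∧ k ≤ s) →
      H = Tm.lams tysI J →
      Occurs J1 J → (∀ x ∈ args, Occurs x J1) →
      G = .lam W ((J.shift 1 0).replace (J1.shift 1 0)
            (Tm.apps (.var 0) (ks.map (fun k => (args.getD (k - i - 1) J1).shift 1 0)))) →
      InvL H G (.lam W' (Tm.lams tysI (.app (.var i)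
        (Tm.lams tysS ((J1.shift (s + 1) 0).replaceList
          ((args.map (fun x => x.shift (s + 1) 0)).zip
            (ks.map (fun k => Tm.var (s - k)))))))))

/-- The `Inverse_R` algorithm, as a relation: `InvR H G F` holds exactly when
    one of the four cases of `Inverse_R(H,G)` applies and produces the
    (non-null) output `F`. -/
inductive InvR : Tm → Tm → Tm → Prop
  | case1 (H G J F : Tm) (A : Ty) :
      G = .lam A (.app (.var 0) (J.shift 1 0)) →
      InvL H J F → InvR H G F
  | case2 (H G J : Tm) (A : Ty) :
      Occurs J H → HasType [] J A →
      G = .lam A ((H.shift 1 0).replace (J.shift 1 0) (.var 0)) →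
      InvR H G J
  | case3 (H G : Tm) (W : Ty) (Js : List (Tm × List Tm)) (tys : List Ty)
      (ks : List ℕ) (s m : ℕ) (J1 : Tm) (args1 : List Tm) :
      (∀ (A : Ty) (J : Tm), G ≠ .lam A (.app (.var 0) (J.shift 1 0))) →
      Js ≠ [] → Js.head? = some (J1, args1) →
      tys.length = s → 1 ≤ s → s ≤ m → ks.length = m →
      (∀ k ∈ ks, 1 ≤ k ∧ k ≤ m) →
      (∀ Ja ∈ Js, Ja.2.length = m ∧ Occurs Ja.1 H ∧ (∀ x ∈ Ja.2, Occurs x Ja.1)) →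
      G = .lam W ((H.shift 1 0).replaceList
        (Js.map (fun Ja => (Ja.1.shift 1 0,
          Tm.apps (.var 0) (ks.map (fun k => (Ja.2.getD (k - 1) Ja.1).shift 1 0)))))) →
      InvR H G (Tm.lams tys ((J1.shift s 0).replaceList
        ((args1.map (fun x => x.shift s 0)).zip (ks.map (fun k => Tm.var (s - k))))))
  | case4 (H G : Tm) (W W' : Ty) (tysI tysS : List Ty) (J J1 : Tm)
      (args : List Tm) (ks : List ℕ) (i s : ℕ) :
      tysI.length = i → tysS.length = s - i → i < s →
      args.length = s - i → ks.length = s - i →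
      (∀ k ∈ ks, i + 1 ≤ k ∧ k ≤ s) →
      H = Tm.lams tysI J →
      Occurs J1 J → (∀ x ∈ args, Occurs x J1) →
      G = .lam W (Tm.lams tysI (.app (.var i)
        (Tm.lams tysS ((J1.shift (s + 1) 0).replaceList
          ((args.map (fun x => x.shift (s + 1) 0)).zip
            (ks.map (fun k => Tm.var (s - k)))))))) →
      InvR H G (.lam W' ((J.shift 1 0).replace (J1.shift 1 0)
        (Tm.apps (.var 0) (ks.map (fun k => (args.getD (k - i - 1) J1).shift 1 0)))))

/-! ### The Answer Set Programming language proper -/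

/-- ASP terms: constants, or function symbols applied to terms. -/
inductive ASPTerm : Tm → Prop
  | const (s : String) : ASPTerm (.const s (.base .e))
  | fn (f : String) (args : List Tm) :
      args ≠ [] → (∀ x ∈ args, ASPTerm x) →
      ASPTerm (Tm.apps (.const f (Ty.arrN args.length (.base .e) (.base .e))) args)

/-- ASP atoms: predicate symbols applied to terms. -/
inductive ASPAtom : Tm → Prop
  | pred (p : String) (args : List Tm) :
      (∀ x ∈ args, ASPTerm x) →
      ASPAtom (Tm.apps (.const p (Ty.arrN args.length (.base .e) (.base .a))) args)

/-- ASP literals: atoms or negated atoms. -/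
inductive ASPLit : Tm → Prop
  | atom {x} : ASPAtom x → ASPLit x
  | neg {x} : ASPAtom x → ASPLit (.neg x)

/-- ASP gen-literals: literals or naf-literals. -/
inductive ASPGen : Tm → Prop
  | lit {x} : ASPLit x → ASPGen x
  | naf {x} : ASPLit x → ASPGen (.naf x)

/-- Heads of ASP rules: `or`-connected literals. -/
inductive ASPHead : Tm → Prop
  | lit {x} : ASPLit x → ASPHead x
  | disj {x y} : ASPHead x → ASPHead y → ASPHead (.disj x y)

/-- Bodies of ASP rules: `,`-connected gen-literals. -/
inductive ASPBody : Tm → Prop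
  | gen {x} : ASPGen x → ASPBody x
  | conj {x y} : ASPBody x → ASPBody y → ASPBody (.conj x y)

/-- ASP rules `L₀ or … or L_k ← L_{k+1},…, not L_n.` (including facts and
    constraints). -/
inductive ASPRule : Tm → Prop
  | mk {h b} : ASPHead h → ASPBody b → ASPRule (.rule h b)
  | fact {h} : ASPHead h → ASPRule (.ruleH h)
  | constr {b} : ASPBody b → ASPRule (.ruleB b)

/-- ASP programs: `.`-separated sequences of ASP rules. -/
inductive ASPProg : Tm → Prop
  | single {r} : ASPRule r → ASPProg r
  | seq {x y} : ASPProg x → ASPProg y → ASPProg (.seq x y)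

/-- Expressions of the ASP language, by base type. -/
def ASPExpr (M : Tm) : BTy → Prop
  | .e => ASPTerm M
  | .a => ASPAtom M
  | .l => ASPLit M
  | .g => ASPGen M
  | .h => ASPHead M
  | .d => ASPBody M
  | .t => ASPProg M

/-! The substitution triggered by `F @ G` undoes the replacement of `G` by `v` at every depth `k`:
there the pattern is `G` shifted past `v`, i.e. `G.shift 1 k`, and since shifting is injective it
matches `t.shift 1 k` exactly when `t = G`. The two sides stay in step under a binder because
shifts commute. -/

namespace Tm

theorem shift_var (d c n : ℕ) : (var n).shift d c = var (if n < c then n else n + d) := by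
  rw [shift, apply_ite var]

theorem shift_shift_of_le (t : Tm) (d d' : ℕ) {c c' : ℕ} (h : c' ≤ c) :
    (t.shift d c).shift d' c' = (t.shift d' c').shift d (c + d') := by
  induction t generalizing c c' with
  | var n =>
    simp only [shift_var, var.injEq]
    grind
  | lam A b ih => simp only [shift, ih (Nat.succ_le_succ h), Nat.add_right_comm c 1 d']
  | _ => simp_all only [shift]

theorem subst_shift (k : ℕ) (s t : Tm) : subst k s (t.shift 1 k) = t := by
  induction t generalizing k s with
  | var n =>
    rw [shift_var, subst]
    grind
  | _ => simp_all only [shift, subst]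

theorem shift_one_injective (k : ℕ) : Function.Injective (shift 1 k) :=
  Function.LeftInverse.injective (subst_shift k (var 0))

theorem replace_self (A B : Tm) : A.replace A B = B := by
  cases A <;> exact if_pos rfl

theorem replace_var_of_ne {n : ℕ} {A : Tm} (B : Tm) (h : var n ≠ A) :
    (var n).replace A B = var n :=
  if_neg h

theorem subst_replace_shift_self (k : ℕ) (G : Tm) :
    subst k G ((G.shift 1 k).replace (G.shift 1 k) (var k)) = G := by
  rw [replace_self, subst, if_pos rfl]

theorem subst_replace_shift (k : ℕ) (G t : Tm) :
    subst k G ((t.shift 1 k).replace (G.shift 1 k) (var k)) = t := by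
  induction t generalizing k G with
    (refine (eq_or_ne _ G).elim (fun h => h ▸ subst_replace_shift_self k _) fun hne => ?_
     replace hne := (shift_one_injective k).ne hne)
  | var n =>
    rw [shift_var] at hne
    rw [shift_var, replace_var_of_ne _ hne, ← shift_var, subst_shift]
  | lam T b ih =>
    have pattern_under_binder : (G.shift 1 k).shift 1 0 = (G.shift 1 0).shift 1 (k + 1) :=
      shift_shift_of_le G 1 1 k.zero_le
    have var_under_binder : (var k).shift 1 0 = var (k + 1) := shift_var 1 0 k
    rw [shift] at hne ⊢
    rw [replace, if_neg hne, pattern_under_binder, var_under_binder, subst, ih]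
  | _ =>
    rw [shift] at hne ⊢
    simp_all only [replace, if_false, subst]

end Tm

theorem invL_case2_sound_general (H G : Tm) (B : Ty) :
    Step (.app (.lam B ((H.shift 1 0).replace (G.shift 1 0) (.var 0))) G) H := by
  have beta_step := Step.beta (A := B) (b := (H.shift 1 0).replace (G.shift 1 0) (.var 0)) (x := G)
  rwa [Tm.subst_replace_shift] at beta_step

/-- **Soundness of case 2 of `Inverse_L`.**  If `G` is a sub-term of the typed ASP
λ-calculus formula `H` (both in β-normal form, `G` of type `B`) and
`F = λv.H(G : v)`, where `H(G : v)` replaces every occurrence of `G` in `H` by the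
fresh variable `v` of the same type as `G`, then `F @ G` β-reduces to `H`. -/
theorem invL_case2_sound (H G : Tm) (A B : Ty)
    (hH : IsFormula H A) (hG : IsFormula G B)
    (hHnf : H.IsNormal) (hGnf : G.IsNormal)
    (hocc : Occurs G H) :
    NormalizesTo
      (Tm.app (Tm.lam B ((H.shift 1 0).replace (G.shift 1 0) (Tm.var 0))) G) H :=
  ⟨.single (invL_case2_sound_general H G B), hHnf⟩

end ASPLambda
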